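/- Let n1 ≥ n2 ≥ 1, let L0 ∈ ℝ^{n1×n2} have rank r ≤ n2/10 with compact SVD L0 = UΣVᵀ (U, V with orthonormal columns), let S0 vanish off Ω and be nonzero on Ω, let Z0 ∈ ℝ^{n1×n2} be arbitrary, and set D = L0 + S0 + Z0, λ = 1/√n1, μ = √(n2/2). Suppose there exist W, F, H ∈ ℝ^{n1×n2} with UVᵀ + W = λ(sign(S0) + F + P_Ω H), W ∈ T⊥, ‖W‖ ≤ 1/2, P_Ω F = 0, ‖F‖_∞ ≤ 1/2, and ‖P_Ω H‖_F ≤ 1/(260√2). Then every minimizer (L̂, Ŝ) of the √PCP problem with these λ, μ satisfies, with δ_L = L̂ − L0 and δ_S = Ŝ − S0: (1/(520·√(n1·n2)))·(‖δ_L‖_F + ‖δ_S‖_F) + 2‖Z0‖_F ≥ 0.15·‖δ_L + δ_S‖_F. -/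

import Mathlib

open Matrix
open scoped BigOperators

/-- Frobenius norm of a real matrix. -/
noncomputable def frob {n1 n2 : ℕ} (A : Matrix (Fin n1) (Fin n2) ℝ) : ℝ :=
  Real.sqrt (∑ i, ∑ j, A i j ^ 2)

/-- Entrywise ℓ¹ norm. -/
noncomputable def l1norm {n1 n2 : ℕ} (A : Matrix (Fin n1) (Fin n2) ℝ) : ℝ :=
  ∑ i, ∑ j, |A i j|

/-- Trace inner product ⟨A,B⟩ = trace(AᵀB). -/
noncomputable def minner {n1 n2 : ℕ} (A B : Matrix (Fin n1) (Fin n2) ℝ) : ℝ :=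
  ∑ i, ∑ j, A i j * B i j

/-- Spectral norm (largest singular value), as the ℓ²→ℓ² operator norm. -/
noncomputable def spec {n1 n2 : ℕ} (A : Matrix (Fin n1) (Fin n2) ℝ) : ℝ :=
  sSup {c : ℝ | ∃ x : Fin n2 → ℝ, (∑ j, x j ^ 2) ≤ 1 ∧
    c = Real.sqrt (∑ i, (∑ j, A i j * x j) ^ 2)}

/-- Nuclear norm (sum of singular values), via duality with the spectral norm. -/
noncomputable def nuc {n1 n2 : ℕ} (A : Matrix (Fin n1) (Fin n2) ℝ) : ℝ :=
  sSup {c : ℝ | ∃ B : Matrix (Fin n1) (Fin n2) ℝ, spec B ≤ 1 ∧ c = minner A B}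

/-- P_Ω: the matrix agreeing with `M` on `Ω` and zero off `Ω`. -/
noncomputable def projS {n1 n2 : ℕ} (Ω : Finset (Fin n1 × Fin n2))
    (M : Matrix (Fin n1) (Fin n2) ℝ) : Matrix (Fin n1) (Fin n2) ℝ :=
  Matrix.of fun i j => if (i, j) ∈ Ω then M i j else 0

/-- Entrywise sign matrix. -/
noncomputable def signM {n1 n2 : ℕ} (A : Matrix (Fin n1) (Fin n2) ℝ) :
    Matrix (Fin n1) (Fin n2) ℝ :=
  Matrix.of fun i j => Real.sign (A i j)

/-- The tangent space T = {UQᵀ + RVᵀ}. -/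
def memT {n1 n2 r : ℕ} (U : Matrix (Fin n1) (Fin r) ℝ) (V : Matrix (Fin n2) (Fin r) ℝ)
    (M : Matrix (Fin n1) (Fin n2) ℝ) : Prop :=
  ∃ (Q : Matrix (Fin n2) (Fin r) ℝ) (R : Matrix (Fin n1) (Fin r) ℝ), M = U * Qᵀ + R * Vᵀ

/-- Membership in T⊥, the orthogonal complement of the tangent space. -/
def memTperp {n1 n2 r : ℕ} (U : Matrix (Fin n1) (Fin r) ℝ) (V : Matrix (Fin n2) (Fin r) ℝ)
    (W : Matrix (Fin n1) (Fin n2) ℝ) : Prop :=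
  ∀ M, memT U V M → minner W M = 0

/-- (L̂, Ŝ) is a global minimizer of the √PCP objective
`‖L‖_* + λ‖S‖₁ + μ‖L + S − D‖_F`. -/
def IsRootPCPMin {n1 n2 : ℕ} (D : Matrix (Fin n1) (Fin n2) ℝ) (lam mu : ℝ)
    (Lh Sh : Matrix (Fin n1) (Fin n2) ℝ) : Prop :=
  ∀ L S : Matrix (Fin n1) (Fin n2) ℝ,
    nuc Lh + lam * l1norm Sh + mu * frob (Lh + Sh - D) ≤
      nuc L + lam * l1norm S + mu * frob (L + S - D)

/-- (L̂, Ŝ) is a minimizer of StablePCP_c(δ):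
minimize `‖L‖_* + λ‖S‖₁` subject to `‖L + S − D‖_F ≤ δ`. -/
def IsStablePCPMin {n1 n2 : ℕ} (D : Matrix (Fin n1) (Fin n2) ℝ) (lam δ : ℝ)
    (Lh Sh : Matrix (Fin n1) (Fin n2) ℝ) : Prop :=
  frob (Lh + Sh - D) ≤ δ ∧
    ∀ L S : Matrix (Fin n1) (Fin n2) ℝ, frob (L + S - D) ≤ δ →
      nuc Lh + lam * l1norm Sh ≤ nuc L + lam * l1norm S

/-- Frobenius distance between pairs: ‖(L,S) − (L',S')‖_F. -/
noncomputable def pairDist {n1 n2 : ℕ} (L S L' S' : Matrix (Fin n1) (Fin n2) ℝ) : ℝ :=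
  Real.sqrt (frob (L - L') ^ 2 + frob (S - S') ^ 2)

/-- Sample space of the random sparsity model: a uniformly random support of
cardinality m together with iid uniform random signs. -/
abbrev SampleSpace (n1 n2 m : ℕ) : Type :=
  {Ω : Finset (Fin n1 × Fin n2) // Ω.card = m} × ((Fin n1 × Fin n2) → Bool)

/-- The sparse matrix S0 built from fixed magnitudes `a` and a random sample:
S0 vanishes off Ω and equals ±a on Ω according to the random signs. -/
noncomputable def sparseOf {n1 n2 m : ℕ} (a : Fin n1 × Fin n2 → ℝ) (ω : SampleSpace n1 n2 m) :
    Matrix (Fin n1) (Fin n2) ℝ :=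
  Matrix.of fun i j =>
    if (i, j) ∈ ω.1.1 then (if ω.2 (i, j) then a (i, j) else -a (i, j)) else 0

open Classical in
/-- Uniform probability of an event on a finite sample space. -/
noncomputable def unifProb {α : Type*} [Fintype α] (E : α → Prop) : ℝ :=
  ((Finset.univ.filter fun a => E a).card : ℝ) / (Fintype.card α : ℝ)

/-- A matrix as a vector of Euclidean space, indexed by its entries. -/
noncomputable def euclideanVec {n1 n2 : ℕ} (A : Matrix (Fin n1) (Fin n2) ℝ) :
    EuclideanSpace ℝ (Fin n1 × Fin n2) :=
  WithLp.toLp 2 fun p => A p.1 p.2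

theorem norm_euclideanVec {n1 n2 : ℕ} (A : Matrix (Fin n1) (Fin n2) ℝ) :
    ‖euclideanVec A‖ = frob A := by
  simp [euclideanVec, frob, EuclideanSpace.norm_eq, Fintype.sum_prod_type]

theorem inner_euclideanVec {n1 n2 : ℕ} (A B : Matrix (Fin n1) (Fin n2) ℝ) :
    inner ℝ (euclideanVec A) (euclideanVec B) = minner A B := by
  simp [euclideanVec, minner, PiLp.inner_apply, Fintype.sum_prod_type, mul_comm]

theorem euclideanVec_add {n1 n2 : ℕ} (A B : Matrix (Fin n1) (Fin n2) ℝ) :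
    euclideanVec (A + B) = euclideanVec A + euclideanVec B := rfl

theorem euclideanVec_sub {n1 n2 : ℕ} (A B : Matrix (Fin n1) (Fin n2) ℝ) :
    euclideanVec (A - B) = euclideanVec A - euclideanVec B := rfl

theorem frob_nonneg {n1 n2 : ℕ} (A : Matrix (Fin n1) (Fin n2) ℝ) : 0 ≤ frob A :=
  Real.sqrt_nonneg _

theorem frob_neg {n1 n2 : ℕ} (A : Matrix (Fin n1) (Fin n2) ℝ) : frob (-A) = frob A := by
  simp [frob]

theorem frob_sub_le {n1 n2 : ℕ} (A B : Matrix (Fin n1) (Fin n2) ℝ) :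
    frob (A - B) ≤ frob A + frob B := by
  simpa only [← norm_euclideanVec, euclideanVec_sub] using
    norm_sub_le (euclideanVec A) (euclideanVec B)

theorem frob_add_le {n1 n2 : ℕ} (A B : Matrix (Fin n1) (Fin n2) ℝ) :
    frob (A + B) ≤ frob A + frob B := by
  simpa only [← norm_euclideanVec, euclideanVec_add] using
    norm_add_le (euclideanVec A) (euclideanVec B)

theorem abs_minner_le_frob_mul_frob {n1 n2 : ℕ} (A B : Matrix (Fin n1) (Fin n2) ℝ) :
    |minner A B| ≤ frob A * frob B := by
  simpa only [← norm_euclideanVec, ← inner_euclideanVec] using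
    abs_real_inner_le_norm (euclideanVec A) (euclideanVec B)

theorem frob_sq {n1 n2 : ℕ} (A : Matrix (Fin n1) (Fin n2) ℝ) : frob A ^ 2 = minner A A := by
  rw [← norm_euclideanVec, ← inner_euclideanVec, real_inner_self_eq_norm_sq]

theorem minner_eq_trace {n1 n2 : ℕ} (A B : Matrix (Fin n1) (Fin n2) ℝ) :
    minner A B = (Aᵀ * B).trace := by
  simp only [minner, Matrix.trace, Matrix.diag, Matrix.mul_apply, Matrix.transpose_apply]
  exact Finset.sum_comm

theorem minner_comm {n1 n2 : ℕ} (A B : Matrix (Fin n1) (Fin n2) ℝ) :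
    minner A B = minner B A := by
  simp [minner, mul_comm]

theorem minner_add_left {n1 n2 : ℕ} (A B C : Matrix (Fin n1) (Fin n2) ℝ) :
    minner (A + B) C = minner A C + minner B C := by
  simp [minner, add_mul, Finset.sum_add_distrib]

theorem minner_add_right {n1 n2 : ℕ} (A B C : Matrix (Fin n1) (Fin n2) ℝ) :
    minner A (B + C) = minner A B + minner A C := by
  simp [minner, mul_add, Finset.sum_add_distrib]

theorem minner_sub_left {n1 n2 : ℕ} (A B C : Matrix (Fin n1) (Fin n2) ℝ) :
    minner (A - B) C = minner A C - minner B C := by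
  simp [minner, sub_mul, Finset.sum_sub_distrib]

theorem minner_smul_left {n1 n2 : ℕ} (c : ℝ) (A B : Matrix (Fin n1) (Fin n2) ℝ) :
    minner (c • A) B = c * minner A B := by
  simp [minner, mul_assoc, Finset.mul_sum]

theorem spec_bddAbove {n1 n2 : ℕ} (A : Matrix (Fin n1) (Fin n2) ℝ) :
    BddAbove {c : ℝ | ∃ x : Fin n2 → ℝ, (∑ j, x j ^ 2) ≤ 1 ∧
      c = Real.sqrt (∑ i, (∑ j, A i j * x j) ^ 2)} := by
  refine ⟨frob A, ?_⟩
  rintro c ⟨x, hx, rfl⟩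
  refine Real.sqrt_le_sqrt (Finset.sum_le_sum fun i _ => ?_)
  refine (Finset.sum_mul_sq_le_sq_mul_sq _ _ _).trans ?_
  exact mul_le_of_le_one_right (Finset.sum_nonneg fun j _ => sq_nonneg _) hx

theorem dotProduct_self_eq_sum_sq {n : ℕ} (x : Fin n → ℝ) : x ⬝ᵥ x = ∑ j, x j ^ 2 := by
  simp [dotProduct, sq]

theorem dotProduct_self_nonneg_real {n : ℕ} (x : Fin n → ℝ) : 0 ≤ x ⬝ᵥ x := by
  rw [dotProduct_self_eq_sum_sq]
  exact Finset.sum_nonneg fun j _ => sq_nonneg _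

theorem mulVec_dotProduct_self_le_of_spec_le {n1 n2 : ℕ} {A : Matrix (Fin n1) (Fin n2) ℝ}
    {c : ℝ} (hA : spec A ≤ c) (x : Fin n2 → ℝ) :
    (A *ᵥ x) ⬝ᵥ (A *ᵥ x) ≤ c ^ 2 * (x ⬝ᵥ x) := by
  have unit_bound : ∀ y : Fin n2 → ℝ, y ⬝ᵥ y ≤ 1 → (A *ᵥ y) ⬝ᵥ (A *ᵥ y) ≤ c ^ 2 := by
    intro y hy
    rw [dotProduct_self_eq_sum_sq] at hy ⊢
    have h := (le_csSup (spec_bddAbove A) ⟨y, hy, rfl⟩).trans hA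
    exact (Real.sqrt_le_left ((Real.sqrt_nonneg _).trans h)).mp h
  rcases (dotProduct_self_nonneg_real x).eq_or_lt with h0 | hpos
  · have hx : x = 0 := dotProduct_self_eq_zero.mp h0.symm
    simp [hx]
  · set s := Real.sqrt (x ⬝ᵥ x) with hs
    have hs2 : s ^ 2 = x ⬝ᵥ x := Real.sq_sqrt hpos.le
    have hs0 : 0 < s := Real.sqrt_pos.mpr hpos
    have h := unit_bound (s⁻¹ • x) (by
      simp only [smul_dotProduct, dotProduct_smul, smul_eq_mul]
      rw [← hs2]
      field_simp
      exact le_rfl)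
    simp only [Matrix.mulVec_smul, smul_dotProduct, dotProduct_smul, smul_eq_mul] at h
    rw [← hs2]
    field_simp at h
    linarith

theorem spec_le_of_mulVec_dotProduct_self_le {n1 n2 : ℕ} {A : Matrix (Fin n1) (Fin n2) ℝ}
    {c : ℝ} (hc : 0 ≤ c) (hA : ∀ x, (A *ᵥ x) ⬝ᵥ (A *ᵥ x) ≤ c ^ 2 * (x ⬝ᵥ x)) :
    spec A ≤ c := by
  refine Real.sSup_le ?_ hc
  rintro _ ⟨x, hx, rfl⟩
  refine (Real.sqrt_le_left hc).mpr ?_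
  have h := hA x
  rw [dotProduct_self_eq_sum_sq, dotProduct_self_eq_sum_sq] at h
  exact h.trans (mul_le_of_le_one_right (sq_nonneg c) hx)

theorem sum_col_sq_le_of_spec_le {n1 n2 : ℕ} {A : Matrix (Fin n1) (Fin n2) ℝ}
    {c : ℝ} (hA : spec A ≤ c) (j : Fin n2) : ∑ i, A i j ^ 2 ≤ c ^ 2 := by
  simpa [dotProduct_self_eq_sum_sq] using
    mulVec_dotProduct_self_le_of_spec_le hA (Pi.single j 1)

theorem minner_self_le_of_spec_le {n1 n2 : ℕ} {A : Matrix (Fin n1) (Fin n2) ℝ}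
    {c : ℝ} (hA : spec A ≤ c) : minner A A ≤ n2 * c ^ 2 := by
  have h := Finset.sum_le_sum fun (j : Fin n2) (_ : j ∈ Finset.univ) =>
    sum_col_sq_le_of_spec_le hA j
  rw [Finset.sum_comm] at h
  simpa [minner, sq] using h

theorem nuc_bddAbove {n1 n2 : ℕ} (A : Matrix (Fin n1) (Fin n2) ℝ) :
    BddAbove {c : ℝ | ∃ B : Matrix (Fin n1) (Fin n2) ℝ, spec B ≤ 1 ∧ c = minner A B} := by
  refine ⟨frob A * Real.sqrt n2, ?_⟩
  rintro _ ⟨B, hB, rfl⟩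
  refine (le_abs_self _).trans ((abs_minner_le_frob_mul_frob A B).trans ?_)
  refine mul_le_mul_of_nonneg_left (Real.le_sqrt_of_sq_le ?_) (frob_nonneg A)
  simpa [frob_sq] using minner_self_le_of_spec_le hB

theorem minner_le_nuc {n1 n2 : ℕ} (A : Matrix (Fin n1) (Fin n2) ℝ)
    {B : Matrix (Fin n1) (Fin n2) ℝ} (hB : spec B ≤ 1) : minner A B ≤ nuc A :=
  le_csSup (nuc_bddAbove A) ⟨B, hB, rfl⟩

theorem dotProduct_mulVec_transpose {m n : ℕ} (A : Matrix (Fin m) (Fin n) ℝ) (y : Fin m → ℝ)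
    (x : Fin n → ℝ) : y ⬝ᵥ (A *ᵥ x) = (Aᵀ *ᵥ y) ⬝ᵥ x := by
  rw [Matrix.dotProduct_mulVec, Matrix.mulVec_transpose]

theorem mulVec_dotProduct_self_of_orthonormal {m k : ℕ} {U : Matrix (Fin m) (Fin k) ℝ}
    (hU : Uᵀ * U = 1) (x : Fin k → ℝ) : (U *ᵥ x) ⬝ᵥ (U *ᵥ x) = x ⬝ᵥ x := by
  rw [dotProduct_mulVec_transpose, Matrix.mulVec_mulVec, hU, Matrix.one_mulVec]

theorem minner_svd {n1 n2 r : ℕ} (U : Matrix (Fin n1) (Fin r) ℝ)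
    (V : Matrix (Fin n2) (Fin r) ℝ) (σ : Fin r → ℝ) (B : Matrix (Fin n1) (Fin n2) ℝ) :
    minner (U * Matrix.diagonal σ * Vᵀ) B = ∑ k, σ k * (Uᵀ * B * V) k k := by
  have h : (U * Matrix.diagonal σ * Vᵀ)ᵀ * B = V * (Matrix.diagonal σ * (Uᵀ * B)) := by
    simp [Matrix.transpose_mul, Matrix.mul_assoc]
  rw [minner_eq_trace, h, Matrix.trace_mul_comm, Matrix.mul_assoc]
  simp [Matrix.trace, Matrix.diagonal_mul]

theorem compression_diag_le_one {n1 n2 r : ℕ} {U : Matrix (Fin n1) (Fin r) ℝ}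
    {V : Matrix (Fin n2) (Fin r) ℝ} (hU : Uᵀ * U = 1) (hV : Vᵀ * V = 1)
    {B : Matrix (Fin n1) (Fin n2) ℝ} (hB : spec B ≤ 1) (k : Fin r) :
    (Uᵀ * B * V) k k ≤ 1 := by
  set e : Fin r → ℝ := Pi.single k 1
  set u := U *ᵥ e
  set w := B *ᵥ (V *ᵥ e)
  have hu : u ⬝ᵥ u = 1 := by
    rw [mulVec_dotProduct_self_of_orthonormal hU]; simp [e]
  have hw : w ⬝ᵥ w ≤ 1 := by
    have h := mulVec_dotProduct_self_le_of_spec_le hB (V *ᵥ e)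
    rw [mulVec_dotProduct_self_of_orthonormal hV] at h
    have he : e ⬝ᵥ e = 1 := by simp [e]
    rwa [he, one_pow, one_mul] at h
  have huw : (Uᵀ * B * V) k k = u ⬝ᵥ w := by
    have h : u ⬝ᵥ w = e ⬝ᵥ ((Uᵀ * B * V) *ᵥ e) := by
      rw [dotProduct_comm, dotProduct_mulVec_transpose, dotProduct_comm]
      simp [w, Matrix.mulVec_mulVec, Matrix.mul_assoc]
    rw [h]; simp [e]
  have h := dotProduct_self_nonneg_real (u - w)
  rw [sub_dotProduct, dotProduct_sub, dotProduct_sub, dotProduct_comm w u] at h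
  linarith

theorem nuc_svd_le {n1 n2 r : ℕ} {U : Matrix (Fin n1) (Fin r) ℝ}
    {V : Matrix (Fin n2) (Fin r) ℝ} {σ : Fin r → ℝ} (hU : Uᵀ * U = 1) (hV : Vᵀ * V = 1)
    (hσ : ∀ k, 0 < σ k) : nuc (U * Matrix.diagonal σ * Vᵀ) ≤ ∑ k, σ k := by
  refine Real.sSup_le ?_ (Finset.sum_nonneg fun k _ => (hσ k).le)
  rintro _ ⟨B, hB, rfl⟩
  rw [minner_svd]
  exact Finset.sum_le_sum fun k _ =>
    mul_le_of_le_one_right (hσ k).le (compression_diag_le_one hU hV hB k)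

theorem eq_zero_of_minner_self {m n : ℕ} {A : Matrix (Fin m) (Fin n) ℝ}
    (h : minner A A = 0) : A = 0 := by
  rw [← inner_euclideanVec, inner_self_eq_zero] at h
  ext i j
  exact congrArg (fun v : EuclideanSpace ℝ (Fin m × Fin n) => v (i, j)) h

theorem memTperp.mul_eq_zero {n1 n2 r : ℕ} {U : Matrix (Fin n1) (Fin r) ℝ}
    {V : Matrix (Fin n2) (Fin r) ℝ} {W : Matrix (Fin n1) (Fin n2) ℝ} (hW : memTperp U V W) :
    W * V = 0 := by
  have h := hW ((W * V) * Vᵀ) ⟨0, W * V, by simp⟩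
  apply eq_zero_of_minner_self
  rw [minner_eq_trace] at h ⊢
  rw [Matrix.transpose_mul, Matrix.mul_assoc, Matrix.trace_mul_comm]
  simpa [Matrix.mul_assoc] using h

theorem memTperp.transpose_mul_eq_zero {n1 n2 r : ℕ} {U : Matrix (Fin n1) (Fin r) ℝ}
    {V : Matrix (Fin n2) (Fin r) ℝ} {W : Matrix (Fin n1) (Fin n2) ℝ} (hW : memTperp U V W) :
    Uᵀ * W = 0 := by
  have h := hW (U * (Uᵀ * W)) ⟨(Uᵀ * W)ᵀ, 0, by simp⟩
  apply eq_zero_of_minner_self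
  rw [minner_eq_trace] at h ⊢
  simpa [Matrix.transpose_mul, Matrix.mul_assoc] using h

theorem spec_add_perp_le_one {n1 n2 r : ℕ} {U : Matrix (Fin n1) (Fin r) ℝ}
    {V : Matrix (Fin n2) (Fin r) ℝ} {W : Matrix (Fin n1) (Fin n2) ℝ}
    (hU : Uᵀ * U = 1) (hV : Vᵀ * V = 1) (hW : memTperp U V W) (hWnorm : spec W ≤ 1) :
    spec (U * Vᵀ + W) ≤ 1 := by
  refine spec_le_of_mulVec_dotProduct_self_le zero_le_one fun x => ?_
  set a := Vᵀ *ᵥ x with ha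
  set y := x - V *ᵥ a with hy
  have hWy : W *ᵥ y = W *ᵥ x := by
    rw [hy, Matrix.mulVec_sub, Matrix.mulVec_mulVec, hW.mul_eq_zero]; simp
  have hUa : (U * Vᵀ) *ᵥ x = U *ᵥ a := by rw [ha, Matrix.mulVec_mulVec]
  have horth : (W *ᵥ x) ⬝ᵥ (U *ᵥ a) = 0 := by
    rw [dotProduct_mulVec_transpose, Matrix.mulVec_mulVec, hW.transpose_mul_eq_zero]; simp
  have hle := mulVec_dotProduct_self_le_of_spec_le hWnorm y
  have hyy : y ⬝ᵥ y = x ⬝ᵥ x - a ⬝ᵥ a := by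
    have hVa := mulVec_dotProduct_self_of_orthonormal hV a
    have hxa : x ⬝ᵥ (V *ᵥ a) = a ⬝ᵥ a := by rw [dotProduct_mulVec_transpose]
    rw [hy, sub_dotProduct, dotProduct_sub, dotProduct_sub, dotProduct_comm (V *ᵥ a) x,
      hVa, hxa]
    ring
  rw [hWy, hyy] at hle
  rw [Matrix.add_mulVec, hUa, add_dotProduct, dotProduct_add, dotProduct_add,
    dotProduct_comm (U *ᵥ a) (W *ᵥ x), horth, mulVec_dotProduct_self_of_orthonormal hU]
  linarith

theorem minner_mul_transpose_self {n1 n2 r : ℕ} {U : Matrix (Fin n1) (Fin r) ℝ}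
    {V : Matrix (Fin n2) (Fin r) ℝ} (hU : Uᵀ * U = 1) (hV : Vᵀ * V = 1) :
    minner (U * Vᵀ) (U * Vᵀ) = r := by
  have h := minner_svd U V 1 (U * Vᵀ)
  have hc : Uᵀ * (U * Vᵀ) * V = 1 := by
    rw [← Matrix.mul_assoc, hU, Matrix.one_mul, hV]
  rw [hc] at h
  simpa using h

/-- The certificate `UVᵀ + W` is a subgradient of the nuclear norm at `UΣVᵀ`. -/
theorem nuc_svd_add_minner_le {n1 n2 r : ℕ} {U : Matrix (Fin n1) (Fin r) ℝ}
    {V : Matrix (Fin n2) (Fin r) ℝ} {W : Matrix (Fin n1) (Fin n2) ℝ} {σ : Fin r → ℝ}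
    (hU : Uᵀ * U = 1) (hV : Vᵀ * V = 1) (hσ : ∀ k, 0 < σ k)
    (hW : memTperp U V W) (hWnorm : spec W ≤ 1) (L : Matrix (Fin n1) (Fin n2) ℝ) :
    nuc (U * Matrix.diagonal σ * Vᵀ) + minner (L - U * Matrix.diagonal σ * Vᵀ) (U * Vᵀ + W) ≤
      nuc L := by
  have h0 : minner (U * Matrix.diagonal σ * Vᵀ) (U * Vᵀ + W) = ∑ k, σ k := by
    have hc : Uᵀ * (U * Vᵀ + W) * V = 1 := by
      rw [Matrix.mul_add, hW.transpose_mul_eq_zero, ← Matrix.mul_assoc, hU]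
      simpa using hV
    rw [minner_svd, hc]
    simp
  have h1 := minner_le_nuc L (spec_add_perp_le_one hU hV hW hWnorm)
  rw [minner_sub_left, h0]
  linarith [nuc_svd_le hU hV hσ]

/-- `sign S0 + F` is a subgradient of the `ℓ¹` norm at `S0` when `F` vanishes on the support
of `S0` and has entries of absolute value at most one. -/
theorem l1norm_add_minner_le {n1 n2 : ℕ} {S0 F : Matrix (Fin n1) (Fin n2) ℝ}
    (hF0 : ∀ i j, S0 i j ≠ 0 → F i j = 0) (hF1 : ∀ i j, |F i j| ≤ 1)
    (S : Matrix (Fin n1) (Fin n2) ℝ) :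
    l1norm S0 + minner (signM S0 + F) (S - S0) ≤ l1norm S := by
  simp only [l1norm, minner, ← Finset.sum_add_distrib]
  refine Finset.sum_le_sum fun i _ => Finset.sum_le_sum fun j _ => ?_
  simp only [signM, Matrix.add_apply, Matrix.sub_apply, Matrix.of_apply]
  rcases lt_trichotomy (S0 i j) 0 with h | h | h
  · rw [hF0 i j h.ne, Real.sign_of_neg h, abs_of_neg h]
    linarith [neg_le_abs (S i j)]
  · rw [h, Real.sign_zero]
    have h1 : F i j * S i j ≤ |F i j| * |S i j| := by
      rw [← abs_mul]; exact le_abs_self _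
    have h2 := mul_le_of_le_one_left (abs_nonneg (S i j)) (hF1 i j)
    simp only [abs_zero, zero_add, sub_zero]
    linarith
  · rw [hF0 i j h.ne', Real.sign_of_pos h, abs_of_pos h]
    linarith [le_abs_self (S i j)]

theorem frob_certificate_le {n1 n2 r : ℕ} {U : Matrix (Fin n1) (Fin r) ℝ}
    {V : Matrix (Fin n2) (Fin r) ℝ} {W : Matrix (Fin n1) (Fin n2) ℝ}
    (hU : Uᵀ * U = 1) (hV : Vᵀ * V = 1) (hr : (r : ℝ) ≤ (n2 : ℝ) / 10)
    (hW : memTperp U V W) (hWnorm : spec W ≤ 1 / 2) :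
    frob (U * Vᵀ + W) ≤ 0.84 * Real.sqrt ((n2 : ℝ) / 2) := by
  have hn : (0 : ℝ) ≤ (n2 : ℝ) / 2 := by positivity
  refine abs_le_of_sq_le_sq' ?_ (by positivity) |>.2
  have horth : minner W (U * Vᵀ) = 0 := hW _ ⟨V, 0, by simp⟩
  rw [frob_sq, mul_pow, Real.sq_sqrt hn, minner_add_left, minner_add_right, minner_add_right,
    minner_comm (U * Vᵀ) W, horth, minner_mul_transpose_self hU hV]
  have := minner_self_le_of_spec_le hWnorm
  linarith

/-- given a dual certificate, every √PCP minimizer with λ = 1/√n1 and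
μ = √(n2/2) satisfies (1/(520√(n1·n2)))(‖δ_L‖_F + ‖δ_S‖_F) + 2‖Z0‖_F ≥ 0.15‖δ_L + δ_S‖_F. -/
theorem rootPCP_error_inequality {n1 n2 r : ℕ}
    (hn2 : 1 ≤ n2) (hn : n2 ≤ n1) (hr : (r : ℝ) ≤ (n2 : ℝ) / 10)
    (U : Matrix (Fin n1) (Fin r) ℝ) (V : Matrix (Fin n2) (Fin r) ℝ) (σ : Fin r → ℝ)
    (L0 S0 Z0 : Matrix (Fin n1) (Fin n2) ℝ) (Ω : Finset (Fin n1 × Fin n2))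
    (hU : Uᵀ * U = 1) (hV : Vᵀ * V = 1) (hσ : ∀ k, 0 < σ k)
    (hL0 : L0 = U * Matrix.diagonal σ * Vᵀ)
    (hS0 : ∀ p : Fin n1 × Fin n2, p ∈ Ω ↔ S0 p.1 p.2 ≠ 0)
    (W F H : Matrix (Fin n1) (Fin n2) ℝ)
    (hcert : U * Vᵀ + W = (Real.sqrt n1)⁻¹ • (signM S0 + F + projS Ω H))
    (hW : memTperp U V W) (hWnorm : spec W ≤ 1 / 2)
    (hF : projS Ω F = 0) (hFnorm : ∀ i j, |F i j| ≤ 1 / 2)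
    (hH : frob (projS Ω H) ≤ 1 / (260 * Real.sqrt 2)) :
    ∀ Lh Sh : Matrix (Fin n1) (Fin n2) ℝ,
      IsRootPCPMin (L0 + S0 + Z0) (Real.sqrt n1)⁻¹ (Real.sqrt ((n2 : ℝ) / 2)) Lh Sh →
        0.15 * frob ((Lh - L0) + (Sh - S0)) ≤
          (520 * Real.sqrt ((n1 : ℝ) * n2))⁻¹ * (frob (Lh - L0) + frob (Sh - S0)) +
            2 * frob Z0 := by
  intro Lh Sh hmin
  have hnuc := nuc_svd_add_minner_le hU hV hσ hW (hWnorm.trans (by norm_num)) Lh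
  rw [← hL0] at hnuc
  have hl1 := l1norm_add_minner_le (S0 := S0) (F := F)
    (fun i j hij => by
      have h := congrFun (congrFun hF i) j
      simpa [projS, (hS0 (i, j)).mpr hij] using h)
    (fun i j => (hFnorm i j).trans (by norm_num)) Sh
  have hopt := hmin L0 S0
  rw [show Lh + Sh - (L0 + S0 + Z0) = (Lh - L0 + (Sh - S0)) - Z0 by abel,
    show L0 + S0 - (L0 + S0 + Z0) = -Z0 by abel, frob_neg] at hopt
  have hYfrob := frob_certificate_le hU hV hr hW hWnorm
  set δL := Lh - L0
  set δS := Sh - S0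
  set Y := U * Vᵀ + W
  set a := Real.sqrt n1 with ha
  set m := Real.sqrt ((n2 : ℝ) / 2) with hm
  have hn1 : (1 : ℝ) ≤ n1 := by exact_mod_cast hn2.trans hn
  have hn2' : (1 : ℝ) ≤ n2 := by exact_mod_cast hn2
  have ha0 : 0 < a := Real.sqrt_pos.mpr (by linarith)
  have hm0 : 0 < m := Real.sqrt_pos.mpr (by linarith)
  have hYS : minner Y δS = a⁻¹ * minner (signM S0 + F) δS + a⁻¹ * minner (projS Ω H) δS := by
    rw [hcert, minner_smul_left, minner_add_left, mul_add]
  have hYδ : -minner Y (δL + δS) ≤ 0.84 * m * frob (δL + δS) :=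
    (neg_le_abs _).trans ((abs_minner_le_frob_mul_frob _ _).trans
      (mul_le_mul_of_nonneg_right hYfrob (frob_nonneg _)))
  rw [minner_add_right] at hYδ
  rw [minner_comm δL Y] at hnuc
  have hl1' := mul_le_mul_of_nonneg_left hl1 (inv_nonneg.mpr ha0.le)
  have hHS : a⁻¹ * minner (projS Ω H) δS ≤ a⁻¹ * (1 / (260 * Real.sqrt 2) * frob δS) :=
    mul_le_mul_of_nonneg_left ((le_abs_self _).trans ((abs_minner_le_frob_mul_frob _ _).trans
      (mul_le_mul_of_nonneg_right hH (frob_nonneg _)))) (inv_nonneg.mpr ha0.le)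
  have htri : m * frob (δL + δS) ≤ m * (frob (δL + δS - Z0) + frob Z0) := by
    refine mul_le_mul_of_nonneg_left ?_ hm0.le
    simpa using frob_add_le (δL + δS - Z0) Z0
  have hδS : frob δS ≤ frob (δL + δS) + frob δL := by
    simpa using frob_sub_le (δL + δS) δL
  set K := (520 * Real.sqrt ((n1 : ℝ) * n2))⁻¹ with hK
  have hK0 : 0 ≤ K := by positivity
  have hK1 : K ≤ 1 / 520 := by
    rw [hK, ← one_div]
    have : 1 ≤ Real.sqrt ((n1 : ℝ) * n2) := Real.one_le_sqrt.mpr (by nlinarith)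
    exact one_div_le_one_div_of_le (by norm_num) (by linarith)
  have hKm : a⁻¹ * (1 / (260 * Real.sqrt 2) * frob δS) = m * (2 * K * frob δS) := by
    have hb : Real.sqrt n2 = Real.sqrt 2 * m := by
      rw [hm, ← Real.sqrt_mul (by norm_num)]; congr 1; ring
    rw [hK, Real.sqrt_mul (by positivity), hb, ← ha]
    field_simp
    ring
  have hmain : m * (0.16 * frob (δL + δS)) ≤ m * (2 * frob Z0 + 2 * K * frob δS) := by
    linarith
  have hmain' := le_of_mul_le_mul_left hmain hm0
  have h1 := mul_le_mul_of_nonneg_left hδS hK0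
  have h2 := mul_le_mul_of_nonneg_right hK1 (frob_nonneg (δL + δS))
  have h3 := frob_nonneg (δL + δS)
  linarith
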